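/- For every causal model M and any two binary endogenous variables X, Y ∈ V (with values in {0,1}) such that P_M(X=1, Y=1) > 0: the Probability of Necessity computed via the B-semantics equals the Probability of Necessity computed in the PO-SCM, i.e., PN^B = P^B((Y=0)_{X←0} | X=1, Y=1) = P^N((Y=0)_{X←0} | X=1, Y=1) = PN^N. -/

import Mathlib

/-!
The two semantics already agree at each actual world. Fix a world `a` of `M` and condition
the PO-SCM on it. A potential outcome `i_κ` is then forced to equal `a i` if `κ` is the
actual value of the parents of `i`, and otherwise keeps its distribution
`P(i | Pa_i = κ)`; all of them stay independent. Since a world `w` of the intervened model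
reads off exactly one potential outcome of each variable, its conditional probability is
the truncated product of the tables of the actualized refinement at `a`
(`CM.sum_poProb_solves`).

The denominators in the definition of a basic counterfactual are evaluated by
`sum_truncated_eq_one`: by acyclicity a truncated factorization has total mass one, so in
the refinement only the probability of the exogenous part of `a` remains
(`CM.pbBasic_eq`), and in the PO-SCM this probability times that of the potential outcomes
(`CM.MN_cfBasic`). Worlds in which one of these factors vanishes have joint probability
zero and do not contribute. `CM.sum_MN_cfBasic` combines these facts, `CM.sum_MN_joint` is
the corresponding identity for the conditioning event, and the theorem follows by summing
over the worlds with `X = 1` and `Y = 1`.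
-/

open Finset

noncomputable section

attribute [local instance] Classical.propDecidable

/-- An assignment of values to the variables. -/
abbrev Asg {ν : Type} (Val : ν → Type) : Type := (i : ν) → Val i

/-- A probabilistic causal model (a causal Bayesian network with explicit exogenous
variables): a signature (variables `ν` with value sets `Val`), a graph given by the
parent map `pa` (with `ord` a witness of acyclicity, and the variables in `exo` being
the roots), and a joint probability distribution that is Markov relative to the graph,
presented by the conditional probability table `cpt i w x = P(i = x | pa i = w|_{pa i})`
of each variable given its parents (for exogenous variables this is the marginal). -/
structure CM (ν : Type) (Val : ν → Type) : Type where
  exo : Finset ν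
  pa : ν → Finset ν
  ord : ν → ℕ
  cpt : (i : ν) → Asg Val → Val i → ℝ

/-- A basic counterfactual event `(Y = yv)_{X ← xv}`. -/
structure CFEvent (ν : Type) (Val : ν → Type) : Type where
  X : Finset ν
  xv : Asg Val
  Y : Finset ν
  yv : Asg Val

namespace CM

variable {ν : Type} {Val : ν → Type}

/-- Well-formedness of a causal model: exogenous variables are roots, the graph is
acyclic, the conditional probability table of each variable depends only on its
parents, and each table is a probability distribution. -/
structure WF [Fintype ν] [∀ i, Fintype (Val i)] (M : CM ν Val) : Prop where
  pa_exo : ∀ i ∈ M.exo, M.pa i = ∅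
  acyclic : ∀ i j, j ∈ M.pa i → M.ord j < M.ord i
  cpt_pa : ∀ (i : ν) (w w' : Asg Val) (x : Val i),
    (∀ j ∈ M.pa i, w j = w' j) → M.cpt i w x = M.cpt i w' x
  cpt_nonneg : ∀ i w x, 0 ≤ M.cpt i w x
  cpt_sum : ∀ i w, ∑ x, M.cpt i w x = 1

variable [Fintype ν] [∀ i, Fintype (Val i)] [∀ i, Nonempty (Val i)]

variable (M : CM ν Val)

/-- The joint distribution `P(U = u, V = v)` (Markov factorization). -/
def joint (w : Asg Val) : ℝ := ∏ i, M.cpt i w (w i)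

/-- The interventional distribution `P_{do(X = xv)}` (truncated factorization). -/
def pdo (X : Finset ν) (xv w : Asg Val) : ℝ :=
  if ∀ i ∈ X, w i = xv i then ∏ i ∈ Xᶜ, M.cpt i w (w i) else 0

/-- `P_{do(X = xv)}(Y = yv | U = u)`, where `u` is the exogenous part of `w`:
the probability of the basic counterfactual `(Y = yv)_{X ← xv}` given the world `w`. -/
def cfBasic (X : Finset ν) (xv : Asg Val) (Y : Finset ν) (yv : Asg Val) (w : Asg Val) : ℝ :=
  (∑ w' : Asg Val,
      if (∀ i ∈ M.exo, w' i = w i) ∧ ∀ i ∈ Y, w' i = yv i then M.pdo X xv w' else 0) /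
  (∑ w' : Asg Val, if ∀ i ∈ M.exo, w' i = w i then M.pdo X xv w' else 0)

/-- The probability of a complex counterfactual
`P(y_x, …, z_w) = Σ_{(u,v)} P(y_x | u,v) ⋯ P(z_w | u,v) P(u,v)`. -/
def cfProb (evs : List (CFEvent ν Val)) : ℝ :=
  ∑ w : Asg Val, (evs.map fun e => M.cfBasic e.X e.xv e.Y e.yv w).prod * M.joint w

/-- Conditional probability of a complex counterfactual given an actual event `Z = zv`:
`P(y_x, …, z_w | Z = zv) = P(y_x, …, z_w, Z = zv) / P(Z = zv)`. -/
def cfProbCond (evs : List (CFEvent ν Val)) (Z : Finset ν) (zv : Asg Val) : ℝ :=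
  (∑ w : Asg Val,
      (if ∀ i ∈ Z, w i = zv i then (evs.map fun e => M.cfBasic e.X e.xv e.Y e.yv w).prod
       else 0) * M.joint w) /
  (∑ w : Asg Val, if ∀ i ∈ Z, w i = zv i then M.joint w else 0)

/-- `M` is a structural causal model: every endogenous variable is a deterministic
function of its parents (the exogenous variables are automatically mutually
independent in this presentation). -/
def IsSCM : Prop :=
  ∀ i ∉ M.exo, ∀ (w : Asg Val) (x : Val i), M.cpt i w x = 0 ∨ M.cpt i w x = 1

/-- The actualized refinement `M^{(u,v)}` of `M` at the actual world `a`: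
for each endogenous variable, the conditional distribution given the *actual* values of
its parents is replaced by the point mass at the actual value of the variable. -/
def refine (a : Asg Val) : CM ν Val where
  exo := M.exo
  pa := M.pa
  ord := M.ord
  cpt := fun i w x =>
    if i ∉ M.exo ∧ ∀ j ∈ M.pa i, w j = a j then (if x = a i then 1 else 0)
    else M.cpt i w x

/-- The B-semantics probability of a basic counterfactual,
`P^B((Y = yv)_{X ← xv} | a) = (P^{a})_{do(X = xv)}(Y = yv | U = u)` where `u` is the
exogenous part of the actual world `a`. -/
def pbBasic (a : Asg Val) (X : Finset ν) (xv : Asg Val) (Y : Finset ν) (yv : Asg Val) : ℝ :=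
  (M.refine a).cfBasic X xv Y yv a

/-- The B-semantics probability of a complex counterfactual. -/
def pbProb (evs : List (CFEvent ν Val)) : ℝ :=
  ∑ w : Asg Val, (evs.map fun e => M.pbBasic w e.X e.xv e.Y e.yv).prod * M.joint w

/-- The conditional B-semantics probability of a complex counterfactual given `Z = zv`. -/
def pbProbCond (evs : List (CFEvent ν Val)) (Z : Finset ν) (zv : Asg Val) : ℝ :=
  (∑ w : Asg Val,
      (if ∀ i ∈ Z, w i = zv i then (evs.map fun e => M.pbBasic w e.X e.xv e.Y e.yv).prod
       else 0) * M.joint w) /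
  (∑ w : Asg Val, if ∀ i ∈ Z, w i = zv i then M.joint w else 0)

/-- An assignment of values to the parents of `i`. -/
def PaAsg (i : ν) : Type := (j : {j : ν // j ∈ M.pa i}) → Val j.1

instance (i : ν) : Fintype (M.PaAsg i) := by unfold PaAsg; infer_instance
instance (i : ν) : Nonempty (M.PaAsg i) := ⟨fun j => Classical.arbitrary (Val j.1)⟩

/-- Extend an assignment of the parents of `i` to a full assignment (arbitrarily). -/
def extendPa (i : ν) (κ : M.PaAsg i) : Asg Val :=
  fun j => if h : j ∈ M.pa i then κ ⟨j, h⟩ else Classical.arbitrary (Val j)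

/-- The index type of the potential outcome variables `X_{pa_X}` of the PO-SCM:
one for each endogenous variable `X` and each value `pa_X` of its parents. -/
def POI : Type := Σ i : {i : ν // i ∉ M.exo}, M.PaAsg i.1

instance : Fintype (POI M) := by unfold POI; infer_instance

/-- The value set of the potential outcome variable `X_{pa_X}` is that of `X`. -/
def POB : POI M → Type := fun p => Val p.1.1

instance (p : POI M) : Fintype (POB M p) := by unfold POB; infer_instance
instance (p : POI M) : Nonempty (POB M p) := by unfold POB; infer_instance

/-- The type of values of the response variable `U_X` of the canonical frame:
functions from values of the parents of `X` to values of `X`. -/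
def RType (i : ν) : Type := M.PaAsg i → Val i

instance (i : ν) : Fintype (M.RType i) := by unfold RType; infer_instance
instance (i : ν) : Nonempty (M.RType i) := ⟨fun _ => Classical.arbitrary (Val i)⟩

/-- The index type of the response variables of the canonical frame:
one for each endogenous variable. -/
def RVI : Type := {i : ν // i ∉ M.exo}

instance : Fintype (RVI M) := by unfold RVI; infer_instance

/-- The value set of the response variable `U_X`. -/
def RB : RVI M → Type := fun p => M.RType p.1

instance (p : RVI M) : Fintype (RB M p) := by unfold RB; infer_instance
instance (p : RVI M) : Nonempty (RB M p) := by unfold RB; infer_instance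

end CM

/-- The family of value sets of an extended signature `ν ⊕ β`. -/
def SumVal {ν β : Type} (Val : ν → Type) (B : β → Type) : ν ⊕ β → Type := fun i =>
  match i with
  | .inl j => Val j
  | .inr b => B b

section SumValInst

variable {ν β : Type} {Val : ν → Type} {B : β → Type}

instance [∀ i, Fintype (Val i)] [∀ b, Fintype (B b)] (i : ν ⊕ β) :
    Fintype (SumVal Val B i) := by
  cases i with
  | inl j => exact inferInstanceAs (Fintype (Val j))
  | inr b => exact inferInstanceAs (Fintype (B b))

instance [∀ i, Nonempty (Val i)] [∀ b, Nonempty (B b)] (i : ν ⊕ β) :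
    Nonempty (SumVal Val B i) := by
  cases i with
  | inl j => exact inferInstanceAs (Nonempty (Val j))
  | inr b => exact inferInstanceAs (Nonempty (B b))

/-- Lift an assignment on `ν` to one on `ν ⊕ β` (arbitrary on the new variables). -/
def liftAsg [∀ b, Nonempty (B b)] (xv : Asg Val) : Asg (SumVal Val B) := fun i =>
  match i with
  | .inl j => xv j
  | .inr b => Classical.arbitrary (B b)

/-- Lift a counterfactual event on the original variables to the extended signature. -/
def liftCFEvent [∀ b, Nonempty (B b)] (e : CFEvent ν Val) : CFEvent (ν ⊕ β) (SumVal Val B) :=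
  ⟨e.X.image Sum.inl, liftAsg e.xv, e.Y.image Sum.inl, liftAsg e.yv⟩

variable [Fintype ν] [Fintype β] [∀ i, Fintype (Val i)] [∀ b, Fintype (B b)]
  [∀ i, Nonempty (Val i)] [∀ b, Nonempty (B b)]

/-- The probability, computed in a model `N` over an extended signature, of a complex
counterfactual over the original variables. -/
def extProb (N : CM (ν ⊕ β) (SumVal Val B)) (evs : List (CFEvent ν Val)) : ℝ :=
  N.cfProb (evs.map liftCFEvent)

/-- The probability, computed in a model `N` over an extended signature, of a complex
counterfactual over the original variables, conditional on an actual event `Z = zv`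
over the original variables. -/
def extProbCond (N : CM (ν ⊕ β) (SumVal Val B)) (evs : List (CFEvent ν Val))
    (Z : Finset ν) (zv : Asg Val) : ℝ :=
  N.cfProbCond (evs.map liftCFEvent) (Z.image Sum.inl) (liftAsg zv)

/-- The probability, computed in a model `N` over an extended signature, of a basic
counterfactual conditional on the values `a` of *all* the original variables
(marginalizing over the added exogenous variables), via the law of total probability. -/
def extBasicCond (N : CM (ν ⊕ β) (SumVal Val B)) (a : Asg Val)
    (X : Finset ν) (xv : Asg Val) (Y : Finset ν) (yv : Asg Val) : ℝ :=
  (∑ w : Asg (SumVal Val B),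
      if ∀ i : ν, w (Sum.inl i) = a i then
        N.cfBasic (X.image Sum.inl) (liftAsg xv) (Y.image Sum.inl) (liftAsg yv) w * N.joint w
      else 0) /
  (∑ w : Asg (SumVal Val B), if ∀ i : ν, w (Sum.inl i) = a i then N.joint w else 0)

end SumValInst

namespace CM

variable {ν : Type} {Val : ν → Type} [Fintype ν] [∀ i, Fintype (Val i)] [∀ i, Nonempty (Val i)]
variable (M : CM ν Val)

/-- The PO-SCM `M^N` of `M`: the structural causal model obtained from `M` by adding,
for each endogenous variable `X` and each value `pa_X` of its parents, an exogenous
potential outcome variable `X_{pa_X}` (with marginal `P_M(X | Pa_X = pa_X)`, all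
exogenous variables mutually independent), and the structural equation
`X = X_{pa_X}` whenever `Pa_X = pa_X`. -/
def MN : CM (ν ⊕ POI M) (SumVal Val (POB M)) where
  exo := (M.exo.image Sum.inl) ∪ (univ.image Sum.inr)
  pa := fun i =>
    match i with
    | .inl j => ((M.pa j).image Sum.inl) ∪
        ((univ.filter fun p : POI M => p.1.1 = j).image Sum.inr)
    | .inr _ => ∅
  ord := fun i =>
    match i with
    | .inl j => M.ord j + 1
    | .inr _ => 0
  cpt := fun i =>
    match i with
    | .inl j => fun w x =>
        if h : j ∈ M.exo then M.cpt j (fun k => w (Sum.inl k)) x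
        else if x = w (Sum.inr ⟨⟨j, h⟩, fun k => w (Sum.inl k.1)⟩) then 1 else 0
    | .inr p => fun _ x => M.cpt p.1.1 (M.extendPa p.1.1 p.2) x

/-- `P^N(y_x, …, z_w)`: the probability of a complex counterfactual computed in the
PO-SCM `M^N`. -/
def pnProb (evs : List (CFEvent ν Val)) : ℝ := extProb M.MN evs

/-- `P^N(y_x, …, z_w | Z = zv)`: the conditional probability of a complex
counterfactual computed in the PO-SCM `M^N`, given an actual event on the
endogenous variables. -/
def pnProbCond (evs : List (CFEvent ν Val)) (Z : Finset ν) (zv : Asg Val) : ℝ :=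
  extProbCond M.MN evs Z zv

/-- `P^N((Y = yv)_{X ← xv} | U = u, V = v)`: the probability of a basic counterfactual
computed in the PO-SCM `M^N`, conditional on the exogenous and endogenous variables of
`M` only (marginalizing over the potential outcome variables). -/
def pnBasicCond (a : Asg Val) (X : Finset ν) (xv : Asg Val) (Y : Finset ν) (yv : Asg Val) : ℝ :=
  extBasicCond M.MN a X xv Y yv

/-- A canonical SCM for `M`, determined by a distribution `q` of the response variables:
the SCM over the canonical frame, which adds for each endogenous variable `X` an
exogenous response variable `U_X` ranging over the functions `f_X : R(Pa_X) → R(X)`,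
with the structural equation `X = f_X(Pa_X)` where `f_X` is the value of `U_X`. -/
def canonSCM (q : (p : RVI M) → RType M p.1 → ℝ) : CM (ν ⊕ RVI M) (SumVal Val (RB M)) where
  exo := (M.exo.image Sum.inl) ∪ (univ.image Sum.inr)
  pa := fun i =>
    match i with
    | .inl j => ((M.pa j).image Sum.inl) ∪
        ((univ.filter fun p : RVI M => p.1 = j).image Sum.inr)
    | .inr _ => ∅
  ord := fun i =>
    match i with
    | .inl j => M.ord j + 1
    | .inr _ => 0
  cpt := fun i =>
    match i with
    | .inl j => fun w x =>
        if h : j ∈ M.exo then M.cpt j (fun k => w (Sum.inl k)) x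
        else if x = w (Sum.inr ⟨j, h⟩) (fun k => w (Sum.inl k.1)) then 1 else 0
    | .inr p => fun _ x => q p x

/-- `q` is the distribution of the response variables of a canonical SCM for `M`:
it is a probability distribution (the response variables being mutually independent and
independent of the exogenous variables of `M`, whose distribution is kept), and it
reproduces the conditional probability tables of `M`:
`P_M(X = x | Pa_X = pa_X) = Σ_{f_X with f_X(pa_X) = x} P(U_X = f_X)`. -/
def IsCanonicalDist (q : (p : RVI M) → RType M p.1 → ℝ) : Prop :=
  (∀ p x, 0 ≤ q p x) ∧ (∀ p, ∑ f, q p f = 1) ∧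
  ∀ (p : RVI M) (κ : M.PaAsg p.1) (x : Val p.1),
    M.cpt p.1 (M.extendPa p.1 κ) x = ∑ f ∈ univ.filter (fun f : RType M p.1 => f κ = x), q p f

/-- The distribution of the response variables of the GH-SCM:
`P(U_X = f_X) = ∏_{pa_X} P_M(X = f_X(pa_X) | Pa_X = pa_X)`. -/
def qGH : (p : RVI M) → RType M p.1 → ℝ := fun p f =>
  ∏ κ : M.PaAsg p.1, M.cpt p.1 (M.extendPa p.1 κ) (f κ)

end CM

/-- A default assignment. -/
def dfltAsg {ν : Type} (Val : ν → Type) [∀ i, Nonempty (Val i)] : Asg Val :=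
  fun i => Classical.arbitrary (Val i)

set_option linter.unusedSectionVars false

/-! ### Finite sums and products -/

section Sums

/-- Congruence for `if` allowing arbitrary decidability instances on both sides. -/
lemma ite_congr_inst {P Q : Prop} {dP : Decidable P} {dQ : Decidable Q} {x y u v : ℝ}
    (h : P ↔ Q) (h1 : Q → x = u) (h2 : ¬Q → y = v) :
    @ite ℝ P dP x y = @ite ℝ Q dQ u v := by
  by_cases hQ : Q
  · rw [if_pos hQ, if_pos (h.2 hQ), h1 hQ]
  · rw [if_neg hQ, if_neg (mt h.1 hQ), h2 hQ]

/-- The assignment of the extended signature with components `a` and `r`. -/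
def joinAsg {ν β : Type} {Val : ν → Type} {B : β → Type} (a : Asg Val) (r : Asg B) :
    Asg (SumVal Val B) := fun i =>
  match i with
  | .inl j => a j
  | .inr b => r b

/-- The `Fintype` instance on the left is arbitrary because the one found for the sum type
`ν ⊕ β` differs from the one for a generic index type. -/
lemma sum_joinAsg {ν β : Type} {Val : ν → Type} {B : β → Type} [Fintype ν] [Fintype β]
    [∀ i, Fintype (Val i)] [∀ b, Fintype (B b)]
    {inst : Fintype (Asg (SumVal Val B))} (f : Asg (SumVal Val B) → ℝ) :
    (∑ w ∈ @univ _ inst, f w) = ∑ a : Asg Val, ∑ r : Asg B, f (joinAsg a r) := by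
  let e : Asg Val × Asg B ≃ Asg (SumVal Val B) :=
    { toFun := fun q => joinAsg q.1 q.2
      invFun := fun w => (fun j => w (Sum.inl j), fun b => w (Sum.inr b))
      left_inv := fun q => rfl
      right_inv := fun w => by funext i; cases i <;> rfl }
  rw [← Fintype.sum_equiv e (fun q => f (joinAsg q.1 q.2)) f (fun _ => rfl),
    Fintype.sum_prod_type]

/-- The total mass of a truncated Markov factorization is one. The proof fixes one more
variable at a time, always of minimal rank among the free ones, so that its parents
already have known values. -/
lemma sum_truncated_eq_one {ν : Type} {Val : ν → Type} [Fintype ν] [∀ i, Fintype (Val i)]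
    (pa : ν → Finset ν) (ord : ν → ℕ) (K : (i : ν) → Asg Val → Val i → ℝ)
    (hac : ∀ i j, j ∈ pa i → ord j < ord i)
    (S₀ : Finset ν)
    (hpa : ∀ i ∉ S₀, ∀ (w w' : Asg Val) (x : Val i),
      (∀ j ∈ pa i, w j = w' j) → K i w x = K i w' x)
    (hsum : ∀ i ∉ S₀, ∀ w, ∑ x, K i w x = 1) (a₀ : Asg Val) :
    (∑ w : Asg Val, if ∀ i ∈ S₀, w i = a₀ i then ∏ i ∈ S₀ᶜ, K i w (w i) else 0) = 1 := by
  suffices H : ∀ (n : ℕ) (S : Finset ν), S₀ ⊆ S → Sᶜ.card = n → ∀ a : Asg Val,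
      (∑ w : Asg Val, if ∀ i ∈ S, w i = a i then ∏ i ∈ Sᶜ, K i w (w i) else 0) = 1 from
    H _ S₀ subset_rfl rfl a₀
  intro n
  induction n with
  | zero =>
    intro S _ hn a
    have hS : S = univ := by simpa using hn
    subst hS
    have h : ∀ w : Asg Val, (∀ i ∈ (univ : Finset ν), w i = a i) ↔ w = a := fun w =>
      ⟨fun h => funext fun i => h i (mem_univ i), fun h i _ => congrFun h i⟩
    rw [Finset.sum_eq_single a]
    · simp
    · exact fun w _ hw => if_neg (mt (h w).1 hw)
    · simp
  | succ n ih =>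
    intro S hS hn a
    have hne : Sᶜ.Nonempty := by rw [← card_pos, hn]; exact n.succ_pos
    obtain ⟨i, hi, hmin⟩ := exists_min_image Sᶜ ord hne
    have hiS : i ∉ S := by simpa using hi
    have hcompl : Sᶜ = insert i (insert i S)ᶜ := by
      ext j; by_cases hj : j = i <;> simp [hj, hiS]
    have hni : i ∉ (insert i S)ᶜ := by simp
    have hcard : (insert i S)ᶜ.card = n := by
      have := hn; rw [hcompl, card_insert_of_notMem hni] at this; omega
    have hpar : ∀ j ∈ pa i, j ∈ S := by
      intro j hj
      by_contra hjS
      exact absurd (hac i j hj) (not_lt.mpr (hmin j (by simpa using hjS)))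
    have hi0 : i ∉ S₀ := fun h => hiS (hS h)
    have key : ∀ w : Asg Val,
        (if ∀ j ∈ S, w j = a j then ∏ j ∈ Sᶜ, K j w (w j) else 0) =
        ∑ x, K i a x * (if ∀ j ∈ insert i S, w j = Function.update a i x j
          then ∏ j ∈ (insert i S)ᶜ, K j w (w j) else 0) := by
      intro w
      have hcond : ∀ x, (∀ j ∈ insert i S, w j = Function.update a i x j) ↔
          (w i = x ∧ ∀ j ∈ S, w j = a j) := by
        intro x
        rw [forall_mem_insert]
        refine and_congr (by simp) (forall₂_congr fun j hj => ?_)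
        rw [Function.update_of_ne (by rintro rfl; exact hiS hj)]
      simp only [hcond]
      by_cases hw : ∀ j ∈ S, w j = a j
      · rw [if_pos hw, hcompl, prod_insert hni,
          hpa i hi0 w a (w i) (fun j hj => hw j (hpar j hj)), Finset.sum_eq_single (w i)]
        · rw [if_pos ⟨rfl, hw⟩]
        · intro x _ hx
          rw [if_neg (fun h => hx h.1.symm), mul_zero]
        · simp
      · simp [hw]
    rw [Finset.sum_congr rfl fun w _ => key w, sum_comm]
    simp_rw [← mul_sum]
    rw [Finset.sum_congr rfl fun x _ => by
      rw [ih (insert i S) (hS.trans (subset_insert i S)) hcard, mul_one]]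
    exact hsum i hi0 a

lemma prod_split_exo {ν : Type} [Fintype ν] (E : Finset ν) (f : ν → ℝ) :
    ∏ i, f i = (∏ i ∈ E, f i) * ∏ i : {i : ν // i ∉ E}, f i.1 := by
  rw [← prod_mul_prod_compl E f]
  congr 1
  exact (prod_subtype Eᶜ (fun x => by simp) f)

lemma prod_compl_eq_ite {ν : Type} [Fintype ν] (S : Finset ν) (f : ν → ℝ) :
    ∏ i ∈ Sᶜ, f i = ∏ i, if i ∈ S then 1 else f i := by
  rw [← prod_mul_prod_compl S (fun i => if i ∈ S then 1 else f i),
    prod_congr rfl (g := fun _ => (1 : ℝ)) (fun i hi => if_pos hi), prod_const_one, one_mul]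
  exact prod_congr rfl fun i hi => (if_neg (by simpa using hi)).symm

end Sums

namespace CM

variable {ν : Type} {Val : ν → Type} [Fintype ν] [∀ i, Fintype (Val i)] [∀ i, Nonempty (Val i)]
variable (M : CM ν Val)

/-! ### Factorizations of `M`, its refinement and its PO-SCM -/

/-- The probability of the exogenous part of `a`. -/
def exoProb (a : Asg Val) : ℝ := ∏ i ∈ M.exo, M.cpt i a (a i)

/-- The probability of the values `r` of all potential outcome variables. -/
def poProb (r : Asg (POB M)) : ℝ :=
  ∏ p : POI M, M.cpt p.1.1 (M.extendPa p.1.1 p.2) (r p)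

/-- The restriction of `a` to the parents of `i`. -/
def restr (i : ν) (a : Asg Val) : M.PaAsg i := fun k => a k.1

/-- The potential outcome of `i` under `r` when its parents take the values in `a`. -/
def outcome (r : Asg (POB M)) (i : {i : ν // i ∉ M.exo}) (a : Asg Val) : Val i.1 :=
  r ⟨i, M.restr i.1 a⟩

/-- Indicator that `a` satisfies the structural equations determined by `r` of all
endogenous variables outside `S`. -/
def solves (S : Finset ν) (a : Asg Val) (r : Asg (POB M)) : ℝ :=
  ∏ i : {i : ν // i ∉ M.exo},
    if i.1 ∈ S then 1 else if a i.1 = M.outcome r i a then 1 else 0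

/-- The part of the truncated factorization of the refinement of `M` at `a` that comes
from the endogenous variables outside `S`, evaluated at `w`. -/
def refProb (a : Asg Val) (S : Finset ν) (w : Asg Val) : ℝ :=
  ∏ i : {i : ν // i ∉ M.exo}, if i.1 ∈ S then 1 else (M.refine a).cpt i.1 w (w i.1)

variable {M}

lemma exoProb_congr (hM : M.WF) {a w : Asg Val} (h : ∀ i ∈ M.exo, w i = a i) :
    M.exoProb w = M.exoProb a := by
  refine prod_congr rfl fun i hi => ?_
  rw [h i hi]
  exact hM.cpt_pa i w a _ (by simp [hM.pa_exo i hi])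

lemma cpt_extendPa (hM : M.WF) (i : ν) (a : Asg Val) (x : Val i) :
    M.cpt i (M.extendPa i (M.restr i a)) x = M.cpt i a x := by
  refine hM.cpt_pa i _ _ x fun j hj => ?_
  simp [extendPa, restr, hj]

lemma restr_eq_iff (i : ν) (a w : Asg Val) :
    M.restr i w = M.restr i a ↔ ∀ j ∈ M.pa i, w j = a j :=
  ⟨fun h j hj => congrFun h ⟨j, hj⟩, fun h => funext fun j => h j.1 j.2⟩

lemma joint_eq (a : Asg Val) :
    M.joint a = M.exoProb a * ∏ i : {i : ν // i ∉ M.exo}, M.cpt i.1 a (a i.1) :=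
  prod_split_exo M.exo _

lemma MN_joint (a : Asg Val) (r : Asg (POB M)) :
    M.MN.joint (joinAsg a r) = M.exoProb a * M.solves ∅ a r * M.poProb r := by
  rw [joint, Fintype.prod_sum_type, prod_split_exo M.exo]
  congr 1
  congr 1
  · refine prod_congr rfl fun i hi => ?_
    simp only [MN, dif_pos hi]
    rfl
  · refine prod_congr rfl fun i _ => ?_
    simp only [MN, dif_neg i.2, notMem_empty, if_false]
    rfl

lemma MN_pdo {S : Finset ν} (hS : ∀ i ∈ S, i ∉ M.exo) (xv a : Asg Val) (r : Asg (POB M)) :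
    M.MN.pdo (S.image Sum.inl) (liftAsg xv) (joinAsg a r) =
      if ∀ i ∈ S, a i = xv i then M.exoProb a * M.solves S a r * M.poProb r else 0 := by
  have hc : (∀ i ∈ S.image (Sum.inl : ν → ν ⊕ POI M), joinAsg a r i = liftAsg xv i) ↔
      ∀ i ∈ S, a i = xv i := by
    rw [forall_mem_image]; rfl
  rw [pdo]
  refine ite_congr_inst hc (fun _ => ?_) fun _ => rfl
  rw [prod_compl_eq_ite, Fintype.prod_sum_type, prod_split_exo M.exo]
  congr 1
  · congr 1
    · refine prod_congr rfl fun i hi => ?_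
      rw [if_neg (by simpa using fun h => hS i h hi)]
      simp only [MN, dif_pos hi]
      rfl
    · refine prod_congr rfl fun i _ => ?_
      refine ite_congr_inst (by simp) (fun _ => rfl) fun _ => ?_
      simp only [MN, dif_neg i.2]
      rfl
  · refine prod_congr rfl fun p _ => ?_
    rw [if_neg (by simp)]
    rfl

lemma refine_pdo {S : Finset ν} (hS : ∀ i ∈ S, i ∉ M.exo) (xv a w : Asg Val) :
    (M.refine a).pdo S xv w =
      if ∀ i ∈ S, w i = xv i then M.exoProb w * M.refProb a S w else 0 := by
  rw [pdo]
  refine if_congr Iff.rfl ?_ rfl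
  rw [prod_compl_eq_ite, prod_split_exo M.exo]
  congr 1
  refine prod_congr rfl fun i hi => ?_
  rw [if_neg (fun h => hS i h hi)]
  simp [refine, hi]

/-! ### Basic counterfactuals at a fixed world -/

/-- Total mass one, in the form used for kernels that are given on endogenous variables
only: exogenous variables are held at `a` and those of `S` at `xv`. -/
lemma sum_endo_eq_one (hM : M.WF) {S : Finset ν} (hS : ∀ i ∈ S, i ∉ M.exo) (xv a : Asg Val)
    (K : (i : {i : ν // i ∉ M.exo}) → Asg Val → Val i.1 → ℝ)
    (hpa : ∀ i w w' x, (∀ j ∈ M.pa i.1, w j = w' j) → K i w x = K i w' x)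
    (hsum : ∀ i w, ∑ x, K i w x = 1) :
    (∑ w : Asg Val, if ∀ i ∈ M.exo, w i = a i then
      (if ∀ i ∈ S, w i = xv i then
        ∏ i : {i : ν // i ∉ M.exo}, (if i.1 ∈ S then 1 else K i w (w i.1)) else 0) else 0)
      = 1 := by
  have h := sum_truncated_eq_one M.pa M.ord
    (fun i w x => if h : i ∉ M.exo then K ⟨i, h⟩ w x else 1) hM.acyclic (M.exo ∪ S)
    (fun i hi w w' x hw => by
      have : i ∉ M.exo := fun h => hi (mem_union_left _ h)
      simp only [dif_pos this]
      exact hpa ⟨i, this⟩ w w' x hw)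
    (fun i hi w => by
      have : i ∉ M.exo := fun h => hi (mem_union_left _ h)
      simp only [dif_pos this]
      exact hsum ⟨i, this⟩ w)
    (fun i => if i ∈ M.exo then a i else xv i)
  refine Eq.trans ?_ h
  refine Finset.sum_congr rfl fun w _ => ?_
  rw [← ite_and]
  refine ite_congr_inst ?_ (fun _ => ?_) fun _ => rfl
  · constructor
    · rintro ⟨h1, h2⟩ i hi
      by_cases he : i ∈ M.exo
      · simpa [he] using h1 i he
      · simpa [he] using h2 i ((mem_union.1 hi).resolve_left he)
    · intro h
      refine ⟨fun i hi => ?_, fun i hi => ?_⟩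
      · simpa [hi] using h i (mem_union_left _ hi)
      · simpa [hS i hi] using h i (mem_union_right _ hi)
  · rw [prod_compl_eq_ite, prod_split_exo M.exo, prod_eq_one (s := M.exo), one_mul]
    · refine prod_congr rfl fun i _ =>
        ite_congr_inst ?_ (fun _ => rfl) fun _ => ?_
      · simp [i.2]
      · rw [dif_pos i.2]
    · intro i hi
      rw [if_pos (mem_union_left _ hi)]

lemma sum_solves_eq_one (hM : M.WF) {S : Finset ν} (hS : ∀ i ∈ S, i ∉ M.exo) (xv a : Asg Val)
    (r : Asg (POB M)) :
    (∑ w : Asg Val, if ∀ i ∈ M.exo, w i = a i then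
      (if ∀ i ∈ S, w i = xv i then M.solves S w r else 0) else 0) = 1 := by
  refine sum_endo_eq_one hM hS xv a
    (fun i w x => if x = M.outcome r i w then 1 else 0) ?_ ?_
  · intro i w w' x h
    have ho : ∀ κ κ' : M.PaAsg i.1, κ = κ' →
        (show Val i.1 from r ⟨i, κ⟩) = (show Val i.1 from r ⟨i, κ'⟩) := by
      rintro κ _ rfl; rfl
    have hw : M.outcome r i w = M.outcome r i w' := ho _ _ ((restr_eq_iff i.1 w' w).2 h)
    rw [hw]
  · intro i w
    simp

lemma sum_refProb_eq_one (hM : M.WF) {S : Finset ν} (hS : ∀ i ∈ S, i ∉ M.exo)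
    (xv a : Asg Val) :
    (∑ w : Asg Val, if ∀ i ∈ M.exo, w i = a i then
      (if ∀ i ∈ S, w i = xv i then M.refProb a S w else 0) else 0) = 1 := by
  refine sum_endo_eq_one hM hS xv a (fun i w x => (M.refine a).cpt i.1 w x) ?_ ?_
  · intro i w w' x h
    simp only [refine]
    refine if_congr (and_congr_right fun _ => forall₂_congr fun j hj => by rw [h j hj]) rfl
      (hM.cpt_pa i.1 w w' x h)
  · intro i w
    simp only [refine]
    split_ifs
    · simp
    · exact hM.cpt_sum i.1 w

/-- Weight of the worlds `w` compatible with the exogenous part of `a`, with `S` set to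
`xv` and with `T = tv`, under an endogenous weight `g`. -/
def cfSum (M : CM ν Val) (S : Finset ν) (xv : Asg Val) (T : Finset ν) (tv a : Asg Val)
    (g : Asg Val → ℝ) : ℝ :=
  ∑ w : Asg Val, if (∀ i ∈ M.exo, w i = a i) ∧ ∀ i ∈ T, w i = tv i then
    (if ∀ i ∈ S, w i = xv i then g w else 0) else 0

lemma pbBasic_eq (hM : M.WF) {S : Finset ν} (hS : ∀ i ∈ S, i ∉ M.exo) (xv : Asg Val)
    (T : Finset ν) (tv a : Asg Val) (ha : M.exoProb a ≠ 0) :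
    M.pbBasic a S xv T tv = M.cfSum S xv T tv a (M.refProb a S) := by
  have key : ∀ w, (∀ i ∈ M.exo, w i = a i) → (M.refine a).pdo S xv w =
      M.exoProb a * (if ∀ i ∈ S, w i = xv i then M.refProb a S w else 0) := by
    intro w hw
    rw [refine_pdo hS, exoProb_congr hM hw, mul_ite, mul_zero]
  have hden : (∑ w : Asg Val, if ∀ i ∈ (M.refine a).exo, w i = a i then
      (M.refine a).pdo S xv w else 0) = M.exoProb a := by
    rw [← mul_one (M.exoProb a), ← sum_refProb_eq_one hM hS xv a, mul_sum]
    refine Finset.sum_congr rfl fun w _ => ?_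
    rw [mul_ite, mul_zero]
    exact ite_congr rfl (fun h => key w h) fun _ => rfl
  rw [pbBasic, cfBasic, hden, div_eq_iff ha, mul_comm, cfSum, mul_sum]
  refine Finset.sum_congr rfl fun w _ => ?_
  rw [mul_ite, mul_zero]
  exact ite_congr rfl (fun h => key w h.1) fun _ => rfl

lemma MN_exo_iff (a w : Asg Val) (r s : Asg (POB M)) :
    (∀ i ∈ M.MN.exo, joinAsg w s i = joinAsg a r i) ↔
      s = r ∧ ∀ i ∈ M.exo, w i = a i := by
  simp only [MN, forall_mem_union, forall_mem_image]
  constructor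
  · rintro ⟨h1, h2⟩
    exact ⟨funext fun p => h2 (mem_univ p), fun i hi => h1 hi⟩
  · rintro ⟨rfl, h⟩
    exact ⟨fun i hi => h i hi, fun p _ => rfl⟩

lemma MN_cfBasic (hM : M.WF) {S : Finset ν} (hS : ∀ i ∈ S, i ∉ M.exo) (xv : Asg Val)
    (T : Finset ν) (tv a : Asg Val) (r : Asg (POB M)) (ha : M.exoProb a ≠ 0)
    (hr : M.poProb r ≠ 0) :
    M.MN.cfBasic (S.image Sum.inl) (liftAsg xv) (T.image Sum.inl) (liftAsg tv) (joinAsg a r) =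
      M.cfSum S xv T tv a (fun w => M.solves S w r) := by
  have key : ∀ w, (∀ i ∈ M.exo, w i = a i) →
      M.MN.pdo (S.image Sum.inl) (liftAsg xv) (joinAsg w r) =
      M.exoProb a * M.poProb r *
        (if ∀ i ∈ S, w i = xv i then M.solves S w r else 0) := by
    intro w hw
    rw [MN_pdo hS, exoProb_congr hM hw, mul_ite, mul_zero, mul_right_comm]
  have hT : ∀ (w : Asg Val) (s : Asg (POB M)),
      (∀ i ∈ T.image (Sum.inl : ν → ν ⊕ POI M), joinAsg w s i = liftAsg tv i) ↔
      ∀ i ∈ T, w i = tv i := by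
    intro w s; rw [forall_mem_image]; rfl
  -- The sum over potential outcomes collapses to the actual ones, which are exogenous.
  have collapse : ∀ (C : Asg (SumVal Val (POB M)) → Prop) (c : Asg Val → Prop)
      {dC : DecidablePred C} [dc : DecidablePred c]
      {inst : Fintype (Asg (SumVal Val (POB M)))},
      (∀ w s, C (joinAsg w s) ↔ s = r ∧ c w) → (∀ w, c w → ∀ i ∈ M.exo, w i = a i) →
      (∑ w ∈ @univ _ inst, if C w then
        M.MN.pdo (S.image Sum.inl) (liftAsg xv) w else 0) =
      M.exoProb a * M.poProb r * ∑ w : Asg Val, if c w then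
        (if ∀ i ∈ S, w i = xv i then M.solves S w r else 0) else 0 := by
    intro C c dC dc inst hC hc
    rw [sum_joinAsg, mul_sum]
    refine Finset.sum_congr rfl fun w _ => ?_
    rw [Finset.sum_eq_single r
      (fun s _ hs => if_neg (fun h => hs ((hC w s).1 h).1)) (by simp), mul_ite, mul_zero]
    exact ite_congr_inst ((hC w r).trans (by simp)) (fun h => key w (hc w h)) fun _ => rfl
  rw [cfBasic]
  refine (congrArg₂ (· / ·)
    (collapse
      (fun w => (∀ i ∈ M.MN.exo, w i = joinAsg a r i) ∧
        ∀ i ∈ T.image (Sum.inl : ν → ν ⊕ POI M), w i = liftAsg tv i)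
      (fun w => (∀ i ∈ M.exo, w i = a i) ∧ ∀ i ∈ T, w i = tv i)
      (fun w s => by rw [MN_exo_iff, hT, and_assoc]) (fun _ h => h.1))
    (collapse (fun w => ∀ i ∈ M.MN.exo, w i = joinAsg a r i)
      (fun w => ∀ i ∈ M.exo, w i = a i)
      (fun w s => MN_exo_iff a w r s) (fun _ h => h))).trans ?_
  rw [sum_solves_eq_one hM hS xv a r, mul_one, mul_div_cancel_left₀ _ (mul_ne_zero ha hr)]
  rfl

/-! ### Marginalizing out the potential outcomes -/

/-- The contribution of one potential outcome variable `i_κ` to the joint probability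
that `a` is the actual world and `w` the world after intervening on `S`. -/
def poFactor (M : CM ν Val) (S : Finset ν) (a w : Asg Val) (i : {i : ν // i ∉ M.exo})
    (κ : M.PaAsg i.1) (x : Val i.1) : ℝ :=
  M.cpt i.1 (M.extendPa i.1 κ) x * (if κ = M.restr i.1 a then (if a i.1 = x then 1 else 0) else 1)
    * (if κ = M.restr i.1 w then (if i.1 ∈ S then 1 else if w i.1 = x then 1 else 0) else 1)

lemma prod_sum_poFactor (hM : M.WF) (S : Finset ν) (a w : Asg Val)
    (i : {i : ν // i ∉ M.exo}) :
    ∏ κ : M.PaAsg i.1, ∑ x, M.poFactor S a w i κ x =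
      M.cpt i.1 a (a i.1) * (if i.1 ∈ S then 1 else (M.refine a).cpt i.1 w (w i.1)) := by
  have h1 : ∀ κ, κ ≠ M.restr i.1 a → κ ≠ M.restr i.1 w →
      ∑ x, M.poFactor S a w i κ x = 1 := by
    intro κ h h'
    simp [poFactor, h, h', hM.cpt_sum]
  by_cases hw : M.restr i.1 w = M.restr i.1 a
  · rw [Fintype.prod_eq_single (M.restr i.1 a) (fun κ h => h1 κ h (hw ▸ h))]
    have hp := (M.restr_eq_iff i.1 a w).1 hw
    simp only [poFactor, hw, if_true, refine, cpt_extendPa hM, i.2, not_false_eq_true,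
      true_and]
    rw [Finset.sum_eq_single (a i.1) (fun x _ hx => by simp [hx.symm]) (by simp), if_pos hp]
    simp
  · have hp := mt (M.restr_eq_iff i.1 a w).2 hw
    rw [Fintype.prod_eq_mul (M.restr i.1 a) (M.restr i.1 w) (Ne.symm hw)
      (fun κ h => h1 κ h.1 h.2)]
    congr 1
    · simp [poFactor, Ne.symm hw, cpt_extendPa hM]
    · by_cases hS : i.1 ∈ S
      · simp [poFactor, hw, hS, hM.cpt_sum]
      · simp [poFactor, hw, hS, cpt_extendPa hM, refine, hp]

/-- Independence of the potential outcomes: the probability that `a` solves the original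
equations and `w` those of the intervened model is the endogenous factor of `P(a)` times
the weight that the refinement at `a` assigns to `w`. -/
lemma sum_poProb_solves (hM : M.WF) (S : Finset ν) (a w : Asg Val) :
    ∑ r, M.poProb r * M.solves ∅ a r * M.solves S w r =
      (∏ i : {i : ν // i ∉ M.exo}, M.cpt i.1 a (a i.1)) * M.refProb a S w := by
  have hr : ∀ r : Asg (POB M), M.poProb r * M.solves ∅ a r * M.solves S w r =
      ∏ p : POI M, M.poFactor S a w p.1 p.2 (r p) := by
    intro r
    have hsig : ∀ f : POI M → ℝ, ∏ p, f p =
        ∏ i : {i : ν // i ∉ M.exo}, ∏ κ : M.PaAsg i.1, f ⟨i, κ⟩ := fun f =>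
      Fintype.prod_sigma f
    simp only [poFactor, prod_mul_distrib]
    congr 1
    · congr 1
      rw [hsig]
      refine prod_congr rfl fun i _ => ?_
      rw [prod_ite_eq' univ (M.restr i.1 a)]
      simp [outcome]
      rfl
    · rw [hsig]
      refine prod_congr rfl fun i _ => ?_
      rw [prod_ite_eq' univ (M.restr i.1 w)]
      simp [outcome]
      rfl
  rw [Finset.sum_congr rfl fun r _ => hr r]
  have := Finset.prod_univ_sum (fun p : POI M => (univ : Finset (POB M p)))
    (fun p x => M.poFactor S a w p.1 p.2 x)
  rw [Fintype.piFinset_univ] at this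
  rw [← this, refProb, ← prod_mul_distrib]
  refine (Fintype.prod_sigma _).trans (prod_congr rfl fun i _ => ?_)
  exact prod_sum_poFactor hM S a w i

/-- Marginalizing out the potential outcomes recovers the distribution of `M`. -/
lemma sum_MN_joint (hM : M.WF) (a : Asg Val) :
    ∑ r, M.MN.joint (joinAsg a r) = M.joint a := by
  -- With `S = univ` no equation of the intervened model is left.
  have h := sum_poProb_solves hM univ a a
  simp only [solves, refProb, mem_univ, if_true, prod_const_one, mul_one] at h
  rw [joint_eq, ← h, mul_sum]
  refine Finset.sum_congr rfl fun r _ => ?_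
  rw [MN_joint, solves]
  ring

/-- The B-semantics and the PO-SCM agree on basic counterfactuals at each actual world. -/
lemma sum_MN_cfBasic (hM : M.WF) {S : Finset ν} (hS : ∀ i ∈ S, i ∉ M.exo) (xv : Asg Val)
    (T : Finset ν) (tv a : Asg Val) :
    ∑ r, M.MN.cfBasic (S.image Sum.inl) (liftAsg xv) (T.image Sum.inl) (liftAsg tv)
        (joinAsg a r) * M.MN.joint (joinAsg a r) = M.pbBasic a S xv T tv * M.joint a := by
  by_cases ha : M.exoProb a = 0
  · simp [MN_joint, joint_eq (M := M), ha]
  have h : ∀ r, M.MN.cfBasic (S.image Sum.inl) (liftAsg xv) (T.image Sum.inl) (liftAsg tv)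
        (joinAsg a r) * M.MN.joint (joinAsg a r) =
      M.exoProb a * M.cfSum S xv T tv a
        (fun w => M.poProb r * M.solves ∅ a r * M.solves S w r) := by
    intro r
    have hlin : M.cfSum S xv T tv a (fun w => M.poProb r * M.solves ∅ a r * M.solves S w r) =
        M.poProb r * M.solves ∅ a r * M.cfSum S xv T tv a (fun w => M.solves S w r) := by
      simp only [cfSum, mul_sum, mul_ite, mul_zero]
    by_cases hr : M.poProb r = 0
    · rw [MN_joint, hlin, hr]; simp
    · rw [MN_cfBasic hM hS xv T tv a r ha hr, MN_joint, hlin]; ring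
  rw [Finset.sum_congr rfl fun r _ => h r, ← mul_sum, pbBasic_eq hM hS xv T tv a ha, joint_eq,
    mul_left_comm]
  congr 1
  simp only [cfSum]
  rw [sum_comm, sum_mul]
  refine Finset.sum_congr rfl fun w _ => ?_
  split_ifs
  · rw [sum_poProb_solves hM, mul_comm]
  · simp
  · simp

end CM

/-- **Proposition 3 (PN).** Given a causal model `M` and any two binary endogenous
variables `X, Y ∈ V` (with two values, `0` and `1`) such that `P_M(X=1, Y=1) > 0`:
the Probability of Necessity computed via the B-semantics equals the one computed in
the PO-SCM, i.e.
`PN^B = P^B((Y=0)_{X←0} | X=1, Y=1) = P^N((Y=0)_{X←0} | X=1, Y=1) = PN^N`. -/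
theorem PN_B_eq_PN_N
    {ν : Type} {Val : ν → Type} [Fintype ν] [∀ i, Fintype (Val i)] [∀ i, Nonempty (Val i)]
    (M : CM ν Val) (hM : M.WF)
    (X Y : ν) (hX : X ∉ M.exo) (hY : Y ∉ M.exo) (hXY : X ≠ Y)
    (x0 x1 : Val X) (hx : x0 ≠ x1) (hxbin : ∀ v : Val X, v = x0 ∨ v = x1)
    (y0 y1 : Val Y) (hy : y0 ≠ y1) (hybin : ∀ v : Val Y, v = y0 ∨ v = y1)
    (hpos : 0 < ∑ w : Asg Val, if w X = x1 ∧ w Y = y1 then M.joint w else 0) :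
    M.pbProbCond [⟨{X}, Function.update (dfltAsg Val) X x0, {Y}, Function.update (dfltAsg Val) Y y0⟩]
        {X, Y} (Function.update (Function.update (dfltAsg Val) X x1) Y y1)
    = M.pnProbCond [⟨{X}, Function.update (dfltAsg Val) X x0, {Y}, Function.update (dfltAsg Val) Y y0⟩]
        {X, Y} (Function.update (Function.update (dfltAsg Val) X x1) Y y1) := by
  have hS : ∀ i ∈ ({X} : Finset ν), i ∉ M.exo := by simpa using hX
  have hZ : ∀ (Z : Finset ν) (zv a : Asg Val) (r : Asg (CM.POB M)),
      (∀ i ∈ Z.image (Sum.inl : ν → ν ⊕ CM.POI M), joinAsg a r i = liftAsg zv i) ↔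
      ∀ i ∈ Z, a i = zv i := by
    intro Z zv a r; rw [forall_mem_image]; rfl
  simp only [CM.pbProbCond, CM.pnProbCond, extProbCond, CM.cfProbCond, List.map_cons,
    List.map_nil, List.prod_cons, List.prod_nil, mul_one, liftCFEvent]
  rw [sum_joinAsg, sum_joinAsg]
  congr 1
  · refine Finset.sum_congr rfl fun a _ => ?_
    split_ifs with h
    · rw [← CM.sum_MN_cfBasic hM hS]
      exact Finset.sum_congr rfl fun r _ => by rw [if_pos ((hZ _ _ a r).2 h)]
    · rw [zero_mul]
      exact (Finset.sum_eq_zero fun r _ => by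
        rw [if_neg (mt (hZ _ _ a r).1 h), zero_mul]).symm
  · refine Finset.sum_congr rfl fun a _ => ?_
    split_ifs with h
    · rw [← CM.sum_MN_joint hM]
      exact Finset.sum_congr rfl fun r _ => by rw [if_pos ((hZ _ _ a r).2 h)]
    · exact (Finset.sum_eq_zero fun r _ => if_neg (mt (hZ _ _ a r).1 h)).symm

end
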